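/- arXiv:2108.02692 — 2 statements merged into one kernel-verified Lean document; each statement's English description precedes it below -/
import Mathlib

section
/- Let G be a finite simple graph, let Q be a MultiSLP equivalent to P_G, and let 𝔊 be the graph on the constants of Q built from the freely appearing constants and freely appearing goal variables of Q. If a goal variable g_{xy} of Q is defined by a statement g_{xy} ← v_1 ⊕ v_2 in which both arguments v_1 and v_2 are temporal variables, then x ⇌ y in 𝔊. -/
/-- Terms of a MultiSLP over a set of constants `C`:
either a constant, or a variable referenced by its statement index. -/
inductive Term (C : Type) where
  | const : C → Term C
  | var : ℕ → Term C
  deriving DecidableEq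

/-- A MultiSLP over the constants `C`: a sequence of statements
`v_i ← ⊕(t_{i,1},…,t_{i,n_i})` (statement `i` defines variable `i`, each `n_i ≥ 2`,
and every variable used in statement `i` has index `< i`), followed by a return
list of terms whose variables are all defined. -/
structure MultiSLP (C : Type) where
  stmts : List (List (Term C))
  ret : List (Term C)
  arity : ∀ args ∈ stmts, 2 ≤ args.length
  wfStmts : ∀ i, i < stmts.length → ∀ t ∈ stmts.getD i [], ∀ j, t = Term.var j → j < i
  wfRet : ∀ t ∈ ret, ∀ j, t = Term.var j → j < stmts.length

/-- The value of a constant `c` is the standard basis vector `e_c` of `GF(2)^C`. -/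
def eConst {C : Type} [DecidableEq C] (c : C) : C → ZMod 2 := fun d => if d = c then 1 else 0

/-- Value of a term, given the list of values of the previously defined variables. -/
def Term.eval {C : Type} [DecidableEq C] (env : List (C → ZMod 2)) : Term C → (C → ZMod 2)
  | .const c => eConst c
  | .var j => env.getD j 0

/-- Values of the variables of a MultiSLP: the value of variable `i` is the GF(2)-sum
(XOR) of the values of the arguments of statement `i`. -/
def MultiSLP.envList {C : Type} [DecidableEq C] (P : MultiSLP C) : List (C → ZMod 2) :=
  P.stmts.foldl (fun env args => env ++ [(args.map (Term.eval env)).sum]) []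

/-- The result of a MultiSLP: the tuple of values of its returned terms. -/
def MultiSLP.result {C : Type} [DecidableEq C] (P : MultiSLP C) : List (C → ZMod 2) :=
  P.ret.map (Term.eval P.envList)

/-- The value of variable `i` of a MultiSLP. -/
def MultiSLP.value {C : Type} [DecidableEq C] (P : MultiSLP C) (i : ℕ) : C → ZMod 2 :=
  P.envList.getD i 0

/-- The memory-access cost `#_M(P) = Σ_i (n_i + 1)`. -/
def MultiSLP.costM {C : Type} (P : MultiSLP C) : ℕ :=
  (P.stmts.map fun args => args.length + 1).sum
/-- The constants used by `P_G`: the fresh constant `ρ`, the nodes of `G`,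
and for each node `a` the fresh local nodes `λ_a` and `μ_a`. -/
inductive Const (N : Type) where
  | rho : Const N
  | node : N → Const N
  | lam : N → Const N
  | mu : N → Const N
  deriving DecidableEq

/-- The result of `P_G`: the family of values `e_ρ + e_x + e_y` indexed by the
edges of `G_modif` (first the edges of `G`, enumerated by the list `L`, then for
each node `a` — enumerated by `nodes` — the two local edges `(a,λ_a)` and `(a,μ_a)`).
A MultiSLP `Q` is equivalent to `P_G` iff `Q.result = targetValues L nodes`. -/
def targetValues {N : Type} [DecidableEq N] (L : List (N × N)) (nodes : List N) :
    List (Const N → ZMod 2) :=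
  (L.map fun p =>
    eConst Const.rho + eConst (Const.node p.1) + eConst (Const.node p.2))
  ++ nodes.flatMap fun a =>
      [eConst Const.rho + eConst (Const.node a) + eConst (Const.lam a),
       eConst Const.rho + eConst (Const.node a) + eConst (Const.mu a)]

/-- A constant `c` *freely appears* in `Q` if it occurs as an argument of the defining
statement of some temporal (non-returned) variable of `Q`. -/
def FreeConst {C : Type} (Q : MultiSLP C) (c : C) : Prop :=
  ∃ k, k < Q.stmts.length ∧ Term.var k ∉ Q.ret ∧ Term.const c ∈ Q.stmts.getD k []

/-- A goal variable `g_{xy}` (a returned variable with value `e_ρ + e_x + e_y`)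
*freely appears* in `Q` if it occurs as an argument of the defining statement of some
temporal (non-returned) variable of `Q`. -/
def FreeGoalEdge {N : Type} [DecidableEq N] (Q : MultiSLP (Const N)) (x y : Const N) :
    Prop :=
  ∃ i, i < Q.stmts.length ∧ Term.var i ∈ Q.ret ∧
    Q.value i = eConst Const.rho + eConst x + eConst y ∧
    ∃ k, k < Q.stmts.length ∧ Term.var k ∉ Q.ret ∧ Term.var i ∈ Q.stmts.getD k []

/-- The edge relation of the graph `𝔊` on the constants of `Q`: every pair of distinct
freely appearing constants is joined, and for every freely appearing goal variable
`g_{xy}` the constants `x` and `y` are joined. -/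
def GGAdj {N : Type} [DecidableEq N] (Q : MultiSLP (Const N)) (c d : Const N) : Prop :=
  c ≠ d ∧ ((FreeConst Q c ∧ FreeConst Q d) ∨ FreeGoalEdge Q c d ∨ FreeGoalEdge Q d c)

/-- `x ⇌ y`: the constants `x` and `y` are joined by a path in `𝔊`. -/
def GGConn {N : Type} [DecidableEq N] (Q : MultiSLP (Const N)) (x y : Const N) : Prop :=
  Relation.ReflTransGen (GGAdj Q) x y

/-- `c ∈ 𝔊_⋆`: `c` lies in the connected component of `𝔊` containing the freely
appearing constants. -/
def InStar {N : Type} [DecidableEq N] (Q : MultiSLP (Const N)) (c : Const N) : Prop :=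
  ∃ c₀, FreeConst Q c₀ ∧ GGConn Q c₀ c

theorem foldEnv_length {C : Type} [DecidableEq C] (S : List (List (Term C))) :
    (S.foldl (fun env args => env ++ [(args.map (Term.eval env)).sum])
      ([] : List (C → ZMod 2))).length = S.length := by
  induction S using List.reverseRecOn with
  | nil => rfl
  | append_singleton S a ih => simp [List.foldl_append, ih]

theorem foldEnv_getD {C : Type} [DecidableEq C] (S : List (List (Term C)))
    (wf : ∀ i, i < S.length → ∀ t ∈ S.getD i [], ∀ j, t = Term.var j → j < i) :
    ∀ i, i < S.length →
      (S.foldl (fun env args => env ++ [(args.map (Term.eval env)).sum])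
        ([] : List (C → ZMod 2))).getD i 0 =
      ((S.getD i []).map (Term.eval (S.foldl
        (fun env args => env ++ [(args.map (Term.eval env)).sum])
        ([] : List (C → ZMod 2))))).sum := by
  induction S using List.reverseRecOn with
  | nil => intro i hi; simp at hi
  | append_singleton S a ih =>
    intro i hi
    have hlen := foldEnv_length S
    rw [List.foldl_append]
    simp only [List.foldl_cons, List.foldl_nil]
    set env := S.foldl (fun env args => env ++ [(args.map (Term.eval env)).sum])
      ([] : List (C → ZMod 2)) with henv
    have key : ∀ t ∈ (S ++ [a]).getD i [], ∀ w,
        Term.eval (env ++ [w]) t = Term.eval env t := by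
      intro t ht w
      cases t with
      | const c => rfl
      | var j =>
        have hj := wf i hi _ ht j rfl
        have : j < env.length := by
          rw [hlen]; simp at hi; omega
        simp only [Term.eval]
        rw [List.getD_append _ _ _ _ this]
    rw [List.map_congr_left (fun t ht => key t ht _)]
    by_cases h : i < S.length
    · rw [List.getD_append _ _ _ _ (by omega), List.getD_append _ _ _ _ h]
      apply ih _ i h
      intro i hi t ht j hj
      refine wf i (by simp; omega) t ?_ j hj
      rwa [List.getD_append _ _ _ _ hi]
    · have : i = S.length := by simp at hi; omega
      subst this
      rw [List.getD_append_right _ _ _ _ (by omega), List.getD_append_right _ _ _ _ (by omega)]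
      simp [hlen]

theorem value_rec {C : Type} [DecidableEq C] (P : MultiSLP C) (i : ℕ)
    (hi : i < P.stmts.length) :
    P.value i = ((P.stmts.getD i []).map (Term.eval P.envList)).sum :=
  foldEnv_getD P.stmts P.wfStmts i hi

theorem const_finite {N : Type} [Fintype N] : Finite (Const N) := by
  refine Finite.of_surjective
    (fun o : Option (N ⊕ N ⊕ N) => match o with
      | none => Const.rho
      | some (.inl a) => Const.node a
      | some (.inr (.inl a)) => Const.lam a
      | some (.inr (.inr a)) => Const.mu a) ?_
  intro c
  cases c with
  | rho => exact ⟨none, rfl⟩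
  | node a => exact ⟨some (.inl a), rfl⟩
  | lam a => exact ⟨some (.inr (.inl a)), rfl⟩
  | mu a => exact ⟨some (.inr (.inr a)), rfl⟩

theorem target_form {N : Type} [DecidableEq N] (L : List (N × N)) (nodes : List N)
    (hL : ∀ p ∈ L, p.1 ≠ p.2) (v : Const N → ZMod 2) (hv : v ∈ targetValues L nodes) :
    ∃ a b : Const N, a ≠ b ∧ a ≠ Const.rho ∧ b ≠ Const.rho ∧
      v = eConst Const.rho + eConst a + eConst b := by
  simp only [targetValues, List.mem_append, List.mem_map, List.mem_flatMap,
    List.mem_cons, List.not_mem_nil, or_false] at hv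
  rcases hv with ⟨p, hp, rfl⟩ | ⟨a, _, rfl | rfl⟩
  · exact ⟨_, _, by simpa using hL p hp, by simp, by simp, rfl⟩
  · exact ⟨_, _, by simp, by simp, by simp, rfl⟩
  · exact ⟨_, _, by simp, by simp, by simp, rfl⟩

theorem endpoints {N : Type} [DecidableEq N] {x y a b : Const N} (hab : a ≠ b)
    (h : eConst Const.rho + eConst x + eConst y =
      (eConst Const.rho + eConst a + eConst b : Const N → ZMod 2)) :
    (x = a ∧ y = b) ∨ (x = b ∧ y = a) := by
  rw [add_assoc, add_assoc] at h
  have h := add_left_cancel h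
  have ha := congrFun h a
  have hb := congrFun h b
  simp only [Pi.add_apply, eConst] at ha hb
  rw [if_pos trivial, if_neg hab] at ha
  rw [if_pos trivial, if_neg hab.symm] at hb
  have h00 : (0 : ZMod 2) + 0 ≠ 1 + 0 := by decide
  have k00 : (0 : ZMod 2) + 0 ≠ 0 + 1 := by decide
  by_cases h1 : a = x
  · by_cases h4 : b = y
    · exact Or.inl ⟨h1.symm, h4.symm⟩
    · have h3 : b ≠ x := fun h => hab (h1.trans h.symm)
      rw [if_neg h3, if_neg h4] at hb
      exact absurd hb k00
  · by_cases h2 : a = y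
    · by_cases h3 : b = x
      · exact Or.inr ⟨h3.symm, h2.symm⟩
      · have h4 : b ≠ y := fun h => hab (h2.trans h.symm)
        rw [if_neg h3, if_neg h4] at hb
        exact absurd hb k00
    · rw [if_neg h1, if_neg h2] at ha
      exact absurd ha h00

theorem GGConn.symm' {N : Type} [DecidableEq N] {Q : MultiSLP (Const N)} {x y : Const N}
    (h : GGConn Q x y) : GGConn Q y x := by
  have : Std.Symm (GGAdj Q) := ⟨by
    rintro c d ⟨h1, h2⟩
    exact ⟨h1.symm, by tauto⟩⟩
  exact Relation.ReflTransGen.stdSymm.symm _ _ h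

theorem inStar_of_not_conn {N : Type} [Fintype N] [DecidableEq N]
    (Q : MultiSLP (Const N))
    (hform : ∀ k, Term.var k ∈ Q.ret → ∃ a b : Const N, a ≠ b ∧ a ≠ Const.rho ∧
      b ≠ Const.rho ∧ Q.value k = eConst Const.rho + eConst a + eConst b)
    (i : ℕ) (hi : i < Q.stmts.length) (x y : Const N) (hx : x ≠ Const.rho)
    (hval : Q.value i = eConst Const.rho + eConst x + eConst y)
    (j₁ j₂ : ℕ) (hdef : Q.stmts.getD i [] = [Term.var j₁, Term.var j₂])
    (ht₁ : Term.var j₁ ∉ Q.ret) (ht₂ : Term.var j₂ ∉ Q.ret)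
    (hn : ¬ GGConn Q x y) : ∃ c, FreeConst Q c ∧ GGConn Q x c := by
  classical
  by_contra hno
  push Not at hno
  have := const_finite (N := N)
  have := Fintype.ofFinite (Const N)
  have hrho : ¬ GGConn Q x Const.rho := by
    intro h
    rcases Relation.ReflTransGen.cases_tail h with h' | ⟨c, hc, hadj⟩
    · exact hx h'.symm
    · have aux : ∀ u v, FreeGoalEdge Q u v → u ≠ Const.rho ∧ v ≠ Const.rho := by
        rintro u v ⟨k, _, hk, hkv, _⟩
        obtain ⟨a, b, hab, ha, hb, hv⟩ := hform k hk
        rcases endpoints hab (hkv.symm.trans hv) with ⟨rfl, rfl⟩ | ⟨rfl, rfl⟩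
        · exact ⟨ha, hb⟩
        · exact ⟨hb, ha⟩
      rcases hadj.2 with h2 | h2 | h2
      · exact hno _ h2.2 h
      · exact (aux _ _ h2).2 rfl
      · exact (aux _ _ h2).1 rfl
  let φ : (Const N → ZMod 2) →+ ZMod 2 :=
    { toFun := fun v => ∑ c, if GGConn Q x c then v c else 0
      map_zero' := by simp
      map_add' := by
        intro u v
        rw [← Finset.sum_add_distrib]
        refine Finset.sum_congr rfl fun c _ => ?_
        split_ifs <;> simp }
  have hφ : ∀ c, φ (eConst c) = if GGConn Q x c then 1 else 0 := by
    intro c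
    change (∑ d, if GGConn Q x d then eConst c d else 0) = _
    rw [Finset.sum_eq_single c]
    · simp [eConst]
    · intro d _ hd; simp [eConst, hd]
    · simp
  have htemp : ∀ k, k < Q.stmts.length → Term.var k ∉ Q.ret → φ (Q.value k) = 0 := by
    intro k
    induction k using Nat.strong_induction_on with
    | _ k ih =>
      intro hk hkr
      rw [value_rec Q k hk, map_list_sum]
      apply List.sum_eq_zero
      intro w hw
      simp only [List.map_map, List.mem_map, Function.comp] at hw
      obtain ⟨t, ht, rfl⟩ := hw
      cases t with
      | const c =>
        simp only [Term.eval]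
        rw [hφ, if_neg (hno c ⟨k, hk, hkr, ht⟩)]
      | var j =>
        have hj := Q.wfStmts k hk _ ht j rfl
        change φ (Q.value j) = 0
        by_cases hjr : Term.var j ∈ Q.ret
        · obtain ⟨a, b, hab, ha, hb, hv⟩ := hform j hjr
          have hadj : GGAdj Q a b :=
            ⟨hab, Or.inr (Or.inl ⟨j, by omega, hjr, hv, k, hk, hkr, ht⟩)⟩
          have hiff : GGConn Q x a ↔ GGConn Q x b :=
            ⟨fun h => Relation.ReflTransGen.tail h hadj,
             fun h => Relation.ReflTransGen.trans h
              (GGConn.symm' (Relation.ReflTransGen.single hadj))⟩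
          rw [hv, map_add, map_add, hφ, hφ, hφ, if_neg hrho]
          by_cases h : GGConn Q x b
          · rw [if_pos h, if_pos (hiff.2 h)]; decide
          · rw [if_neg h, if_neg (fun h' => h (hiff.1 h'))]; decide
        · exact ih j hj (by omega) hjr
  have h1 := Q.wfStmts i hi (Term.var j₁) (by rw [hdef]; simp) j₁ rfl
  have h2 := Q.wfStmts i hi (Term.var j₂) (by rw [hdef]; simp) j₂ rfl
  have hs : Q.value i = Q.value j₁ + Q.value j₂ := by
    rw [value_rec Q i hi, hdef]
    simp [Term.eval, MultiSLP.value]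
  have e := congrArg φ (hval.symm.trans hs)
  have hxx : GGConn Q x x := Relation.ReflTransGen.refl
  rw [map_add, map_add, map_add, hφ, hφ, hφ, if_neg hrho, if_pos hxx,
    if_neg hn, htemp j₁ (by omega) ht₁, htemp j₂ (by omega) ht₂] at e
  revert e
  decide

/-- **Proposition A3 of the appendix.**  Let `G` be a finite simple graph (with `L`
enumerating the edges and `nodes` enumerating the node set), let `Q` be a MultiSLP
equivalent to `P_G`, and let `𝔊` be the graph on the constants of `Q` built from the
freely appearing constants and freely appearing goal variables of `Q`.  If a goal
variable `g_{xy}` of `Q` is defined by a statement `g_{xy} ← v₁ ⊕ v₂` whose two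
arguments are temporal variables, then `x ⇌ y` in `𝔊`. -/
theorem goal_by_two_temporals_path {N : Type} [Fintype N] [DecidableEq N]
    (G : SimpleGraph N) [DecidableRel G.Adj]
    (L : List (N × N)) (nodes : List N)
    (hnodesN : nodes.Nodup) (hnodesA : ∀ a : N, a ∈ nodes)
    (hLN : (L.map fun p => s(p.1, p.2)).Nodup)
    (hLadj : ∀ p ∈ L, G.Adj p.1 p.2)
    (hLall : ∀ a b : N, G.Adj a b → s(a, b) ∈ L.map fun p => s(p.1, p.2))
    (Q : MultiSLP (Const N)) (hQ : Q.result = targetValues L nodes)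
    (i : ℕ) (hi : i < Q.stmts.length) (hgoal : Term.var i ∈ Q.ret)
    (x y : Const N)
    (hval : Q.value i = eConst Const.rho + eConst x + eConst y)
    (j₁ j₂ : ℕ) (hdef : Q.stmts.getD i [] = [Term.var j₁, Term.var j₂])
    (ht₁ : Term.var j₁ ∉ Q.ret) (ht₂ : Term.var j₂ ∉ Q.ret) :
    GGConn Q x y := by
  have hform : ∀ k, Term.var k ∈ Q.ret → ∃ a b : Const N, a ≠ b ∧ a ≠ Const.rho ∧
      b ≠ Const.rho ∧ Q.value k = eConst Const.rho + eConst a + eConst b := by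
    intro k hk
    refine target_form L nodes (fun p hp => (hLadj p hp).ne) _ ?_
    rw [← hQ]
    exact List.mem_map.2 ⟨_, hk, rfl⟩
  obtain ⟨a, b, hab, ha, hb, hv⟩ := hform i hgoal
  have hxy : x ≠ Const.rho ∧ y ≠ Const.rho := by
    rcases endpoints hab (hval.symm.trans hv) with ⟨rfl, rfl⟩ | ⟨rfl, rfl⟩
    · exact ⟨ha, hb⟩
    · exact ⟨hb, ha⟩
  by_contra hn
  obtain ⟨c, hc, hxc⟩ := inStar_of_not_conn Q hform i hi x y hxy.1 hval j₁ j₂ hdef ht₁ ht₂ hn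
  obtain ⟨d, hd, hyd⟩ := inStar_of_not_conn Q hform i hi y x hxy.2
    (hval.trans (add_right_comm _ _ _)) j₁ j₂ hdef ht₁ ht₂ (fun h => hn h.symm')
  apply hn
  by_cases hcd : c = d
  · subst hcd
    exact Relation.ReflTransGen.trans hxc hyd.symm'
  · exact Relation.ReflTransGen.trans
      (Relation.ReflTransGen.tail hxc ⟨hcd, Or.inl ⟨hc, hd⟩⟩) hyd.symm'
end

section
/- Let P be a MultiSLP and let 𝒲 be a winning strategy of the pebble game on the computation graph of P. Then the program Q_𝒲 obtained by forgetting the node information from 𝒲 — i.e., replacing each instruction n : p ← ⊕(p_1,…,p_k) of 𝒲 by the assignment p ← ⊕(p_1,…,p_k), where pebbles initially placed on leaves are interpreted as the corresponding constants and all other pebbles as (possibly reassigned) variables — together with the return list consisting of the pebbles resting on the goal nodes (in the order of P's return list), is a program equivalent to P: the result of Q_𝒲 equals the result of P. -/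
/-- Nodes of the computation graph of a MultiSLP: leaf nodes are the constants,
inner nodes are the variables (statement indices). -/
abbrev PNode (C : Type) := C ⊕ ℕ

/-- Pebbles: the pebbles initially placed on the leaves are named by the
corresponding constants (`Sum.inl c`); all other pebbles come from a name set `V`
(`Sum.inr p`). -/
abbrev Peb (C V : Type) := C ⊕ V

/-- A game state: the pebble (if any) currently placed on each node of the CG. -/
abbrev GState (C V : Type) := PNode C → Option (Peb C V)

/-- Initially each leaf `ℓ` carries the same-name pebble and no inner node is pebbled. -/
def initState (C V : Type) : GState C V :=
  fun n => match n with
  | Sum.inl c => some (Sum.inl c)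
  | Sum.inr _ => none

/-- The child node of an inner node corresponding to an argument term. -/
def childNode {C : Type} : Term C → PNode C
  | .const c => Sum.inl c
  | .var j => Sum.inr j

/-- An instruction `n : p ← ⊕(p₁, …, p_k)` of the pebble game: `n` is an inner node,
`p` the pebble to be placed on `n` (fresh, or moved from its current node), and
`p₁, …, p_k` the pebbles currently placed on the children of `n`. -/
structure Instr (C V : Type) where
  node : ℕ
  peb : V
  args : List (Peb C V)

/-- Remove the pebble `p` from wherever it currently is. -/
def removePeb {C V : Type} [DecidableEq C] [DecidableEq V]
    (σ : GState C V) (p : V) : GState C V :=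
  fun n => if σ n = some (Sum.inr p) then none else σ n

/-- The instruction is legal at the current position: `n` is an inner node of the CG
of `P` that has not been pebbled yet, and `p₁, …, p_k` are exactly the pebbles
currently placed on the children of `n` (in particular every child is pebbled). -/
def stepOk {C V : Type} (P : MultiSLP C) (visited : List ℕ) (σ : GState C V)
    (ins : Instr C V) : Prop :=
  ins.node < P.stmts.length ∧ ins.node ∉ visited ∧
    (P.stmts.getD ins.node []).map (fun t => σ (childNode t)) = ins.args.map some

/-- Effect of an instruction: the pebble `ins.peb` is removed from its current node
(if any, i.e. it is *moved*; otherwise it is *fresh*) and placed on `ins.node`. -/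
def stepState {C V : Type} [DecidableEq C] [DecidableEq V]
    (σ : GState C V) (ins : Instr C V) : GState C V :=
  fun n => if n = Sum.inr ins.node then some (Sum.inr ins.peb)
           else removePeb σ ins.peb n

/-- A legal play of the pebble game on the CG of `P`, starting from state `σ` with the
set `visited` of already-pebbled inner nodes (each node may be pebbled at most once). -/
def ValidPlay {C V : Type} [DecidableEq C] [DecidableEq V] (P : MultiSLP C) :
    List ℕ → GState C V → List (Instr C V) → Prop
  | _, _, [] => True
  | visited, σ, ins :: rest =>
      stepOk P visited σ ins ∧ ValidPlay P (ins.node :: visited) (stepState σ ins) rest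

/-- Value of a pebble in a program environment: leaf pebbles are interpreted as the
corresponding constants, all other pebbles as (possibly reassigned) variables. -/
def pebVal {C V : Type} [DecidableEq C] (env : V → C → ZMod 2) :
    Peb C V → C → ZMod 2
  | Sum.inl c => eConst c
  | Sum.inr v => env v

/-- Run the program `Q_𝒲` obtained from a play by forgetting the node information:
each instruction `n : p ← ⊕(p₁,…,p_k)` becomes the assignment `p ← ⊕(p₁,…,p_k)`,
where at a use site a variable takes the value of its most recent assignment. -/
def runProg {C V : Type} [DecidableEq C] [DecidableEq V]
    (stmts : List (V × List (Peb C V))) (env : V → C → ZMod 2) : V → C → ZMod 2 :=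
  stmts.foldl (fun e st => Function.update e st.1 ((st.2.map (pebVal e)).sum)) env

/-- Values computed by a list of statements. -/
def envOf {C : Type} [DecidableEq C] (l : List (List (Term C))) : List (C → ZMod 2) :=
  l.foldl (fun env args => env ++ [(args.map (Term.eval env)).sum]) []

theorem envOf_snoc {C : Type} [DecidableEq C] (l : List (List (Term C))) (a : List (Term C)) :
    envOf (l ++ [a]) = envOf l ++ [(a.map (Term.eval (envOf l))).sum] := by
  simp [envOf, List.foldl_append]

theorem envOf_length {C : Type} [DecidableEq C] (l : List (List (Term C))) :
    (envOf l).length = l.length := by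
  induction l using List.reverseRecOn with
  | nil => rfl
  | append_singleton l a ih => rw [envOf_snoc]; simp [ih]

theorem eval_append {C : Type} [DecidableEq C] (e e' : List (C → ZMod 2)) (t : Term C)
    (h : ∀ j, t = Term.var j → j < e.length) : Term.eval (e ++ e') t = Term.eval e t := by
  cases t with
  | const c => rfl
  | var j => exact List.getD_append _ _ _ _ (h j rfl)

theorem envOf_getD {C : Type} [DecidableEq C] (l : List (List (Term C)))
    (wf : ∀ i, i < l.length → ∀ t ∈ l.getD i [], ∀ j, t = Term.var j → j < i) :
    ∀ i, i < l.length →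
      (envOf l).getD i 0 = ((l.getD i []).map (Term.eval (envOf l))).sum := by
  induction l using List.reverseRecOn with
  | nil => intro i hi; simp at hi
  | append_singleton l a ih =>
    have key : ∀ i, i < (l ++ [a]).length →
        ((l ++ [a]).getD i []).map (Term.eval (envOf (l ++ [a]))) =
        ((l ++ [a]).getD i []).map (Term.eval (envOf l)) := by
      intro i hi
      apply List.map_congr_left
      intro t ht
      rw [envOf_snoc]
      apply eval_append
      intro j hj
      have h1 := wf i hi t ht j hj
      rw [envOf_length]
      simp at hi
      omega
    intro i hi
    rw [key i hi, envOf_snoc]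
    by_cases h : i < l.length
    · rw [List.getD_append _ _ _ _ (by rw [envOf_length]; exact h), List.getD_append _ _ _ _ h]
      apply ih _ i h
      intro k hk t ht
      apply wf k (by simp; omega) t
      rw [List.getD_append _ _ _ _ hk]
      exact ht
    · have : i = l.length := by simp at hi; omega
      subst this
      rw [List.getD_append_right _ _ _ _ (by rw [envOf_length]), List.getD_append_right _ _ _ _ le_rfl]
      simp [envOf_length]

/-- Every pebble holds the value of the node it rests on. -/
def PebInv {C V : Type} [DecidableEq C] (P : MultiSLP C) (σ : GState C V)
    (env : V → C → ZMod 2) : Prop :=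
  ∀ (t : Term C) (r : Peb C V), σ (childNode t) = some r → pebVal env r = Term.eval P.envList t

theorem args_sum {C V : Type} [DecidableEq C] (P : MultiSLP C) (σ : GState C V)
    (env : V → C → ZMod 2) (h : PebInv P σ env) (ts : List (Term C)) (rs : List (Peb C V))
    (hh : ts.map (fun t => σ (childNode t)) = rs.map some) :
    rs.map (pebVal env) = ts.map (Term.eval P.envList) := by
  induction ts generalizing rs with
  | nil => cases rs <;> simp_all
  | cons t ts ih =>
    cases rs with
    | nil => simp at hh
    | cons r rs =>
      simp only [List.map_cons, List.cons.injEq] at hh ⊢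
      exact ⟨h t r hh.1, ih rs hh.2⟩

theorem inv_step {C V : Type} [DecidableEq C] [DecidableEq V] (P : MultiSLP C)
    (visited : List ℕ) (σ : GState C V) (env : V → C → ZMod 2) (ins : Instr C V)
    (h : PebInv P σ env) (ok : stepOk P visited σ ins) :
    PebInv P (stepState σ ins)
      (Function.update env ins.peb ((ins.args.map (pebVal env)).sum)) := by
  obtain ⟨h1, -, h3⟩ := ok
  intro t r hr
  unfold stepState at hr
  split_ifs at hr with hn
  · cases t with
    | const c => simp [childNode] at hn
    | var j =>
      simp only [childNode, Sum.inr.injEq] at hn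
      subst hn
      simp only [Option.some.injEq] at hr
      subst hr
      simp only [pebVal, Function.update_self]
      rw [args_sum P σ env h _ _ h3]
      exact (envOf_getD P.stmts P.wfStmts _ h1).symm
  · unfold removePeb at hr
    split_ifs at hr with hp
    rw [← h t r hr]
    cases r with
    | inl c => rfl
    | inr v =>
      have : v ≠ ins.peb := by rintro rfl; exact hp hr
      simp [pebVal, Function.update_of_ne this]

theorem inv_run {C V : Type} [DecidableEq C] [DecidableEq V] (P : MultiSLP C)
    (W : List (Instr C V)) : ∀ (visited : List ℕ) (σ : GState C V) (env : V → C → ZMod 2),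
    PebInv P σ env → ValidPlay P visited σ W →
    PebInv P (W.foldl stepState σ) (runProg (W.map fun ins => (ins.peb, ins.args)) env) := by
  induction W with
  | nil => intro _ _ _ h _; exact h
  | cons ins W ih =>
    intro visited σ env h hv
    exact ih _ _ _ (inv_step P visited σ env ins h hv.1) hv.2

/-- **Soundness of the pebble game (Proposition 5.2).**  Let `P` be a MultiSLP and let
`𝒲` be a winning strategy of the pebble game on the computation graph of `P` (a legal
play after which every goal node carries a pebble).  Let `R` be the return list
consisting, for each returned term of `P`, of the corresponding constant (for a
constant term) or of the pebble resting on the corresponding goal node (for a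
variable term).  Then the program `Q_𝒲`, obtained by forgetting the node information
from `𝒲` and returning `R`, is equivalent to `P`: the result of `Q_𝒲` (the final
values of the returned pebbles, starting from the zero environment) equals the result
of `P`. -/
theorem pebble_game_program_correct {C V : Type} [Fintype C] [DecidableEq C]
    [DecidableEq V]
    (P : MultiSLP C) (W : List (Instr C V))
    (hvalid : ValidPlay P [] (initState C V) W)
    (hwin : ∀ i, Term.var i ∈ P.ret →
      W.foldl stepState (initState C V) (Sum.inr i) ≠ none)
    (R : List (Peb C V))
    (hR : List.Forall₂
      (fun (t : Term C) (r : Peb C V) =>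
        (∀ c, t = Term.const c → r = Sum.inl c) ∧
        (∀ i, t = Term.var i →
          W.foldl stepState (initState C V) (Sum.inr i) = some r))
      P.ret R) :
    R.map (pebVal (runProg (W.map fun ins => (ins.peb, ins.args)) fun _ _ => 0)) =
      P.result := by
  have hinit : PebInv P (initState C V) (fun _ _ => 0) := by
    intro t r hr
    cases t with
    | const c =>
      simp only [childNode, initState, Option.some.injEq] at hr
      subst hr
      rfl
    | var j => simp [childNode, initState] at hr
  have hfin := inv_run P W [] _ _ hinit hvalid
  unfold MultiSLP.result
  clear hwin
  generalize P.ret = L at hR ⊢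
  induction hR with
  | nil => rfl
  | @cons t r ts rs hab _ ih =>
    rw [List.map_cons, List.map_cons, ih]
    congr 1
    cases t with
    | const c => rw [hab.1 c rfl]; rfl
    | var j => exact hfin (Term.var j) r (hab.2 j rfl)
end
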